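/- The Chabauty space C(ℤ²) of the discrete group ℤ² is homeomorphic to ℕ̄ × ℕ̄, where ℕ̄ = ℕ ∪ {∞} is the one-point compactification of ℕ. -/

import Mathlib

/-- The Chabauty space of an additive topological group `G`:
the set of closed additive subgroups of `G`. -/
def ChabautySpace (G : Type*) [AddGroup G] [TopologicalSpace G] : Type _ :=
  {H : AddSubgroup G // IsClosed (H : Set G)}

/-- The Chabauty topology on the space of closed subgroups, generated by the sets
`O_K = {H | H ∩ K = ∅}` for `K` compact and `O'_U = {H | H ∩ U ≠ ∅}` for `U` open. -/
instance ChabautySpace.instTopologicalSpace (G : Type*) [AddGroup G] [TopologicalSpace G] :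
    TopologicalSpace (ChabautySpace G) :=
  TopologicalSpace.generateFrom
    ({S | ∃ K : Set G, IsCompact K ∧ S = {H : ChabautySpace G | (H.1 : Set G) ∩ K = ∅}} ∪
     {S | ∃ U : Set G, IsOpen U ∧ S = {H : ChabautySpace G | ((H.1 : Set G) ∩ U).Nonempty}})

open Set Filter Topology

/-- A compact set with exactly one non-isolated point `q`, and countably infinitely many isolated
points, is parametrized by `OnePoint ℕ`. -/
theorem exists_onePoint_nat_parametrization {X : Type*} [TopologicalSpace X] {S : Set X} {q : X}
    (hS : IsCompact S) (hq : q ∈ S) (hinf : (S \ {q}).Infinite) (hcount : (S \ {q}).Countable)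
    (hiso : ∀ x ∈ S \ {q}, IsOpen {x}) :
    ∃ h : OnePoint ℕ → X, Continuous h ∧ Function.Injective h ∧ range h = S := by
  have := hinf.to_subtype
  have := hcount.to_subtype
  obtain ⟨_⟩ := nonempty_denumerable (S \ {q} : Set X)
  let e : ℕ ≃ (S \ {q} : Set X) := (Denumerable.eqv _).symm
  refine ⟨fun y => y.elim q fun n => e n, ?_, ?_, ?_⟩
  · rw [OnePoint.continuous_iff_from_discrete]
    simp only [OnePoint.elim_some, OnePoint.elim_infty]
    intro U hU
    obtain ⟨V, hVU, hV, hqV⟩ := mem_nhds_iff.1 hU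
    have hfin : (S \ V).Finite := by
      refine (hS.diff hV).finite (isDiscrete_iff_forall_mem_exists_isOpen.2 fun x hx => ?_)
      refine ⟨{x}, hiso x ⟨hx.1, ?_⟩, by simpa using hx⟩
      rintro rfl
      exact hx.2 hqV
    rw [mem_map, mem_cofinite]
    refine (hfin.preimage (f := fun n => (e n : X))
      (Subtype.val_injective.comp e.injective).injOn).subset fun n hn => ?_
    exact ⟨(e n).2.1, fun h => hn (hVU h)⟩
  · intro y z h
    induction y using OnePoint.rec with
    | infty =>
      induction z using OnePoint.rec with
      | infty => rfl
      | coe n => exact absurd h.symm (e n).2.2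
    | coe m =>
      induction z using OnePoint.rec with
      | infty => exact absurd h (e m).2.2
      | coe n => rw [e.injective (Subtype.ext h)]
  · ext x
    simp only [mem_range, OnePoint.exists, OnePoint.elim_infty, OnePoint.elim_some]
    constructor
    · rintro (rfl | ⟨n, rfl⟩)
      exacts [hq, (e n).2.1]
    · intro hx
      by_cases h : x = q
      · exact .inl h.symm
      · exact .inr ⟨e.symm ⟨x, hx, h⟩, by simp⟩

/-- A compact Hausdorff space that is, away from a point `p`, a disjoint union of infinitely many
clopen sets, each with exactly one non-isolated point, is determined up to homeomorphism. -/
theorem nonempty_homeomorph_onePoint_nat_prod_onePoint_nat {X ι : Type*} [TopologicalSpace X]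
    [CompactSpace X] [T2Space X] [Countable ι] [Infinite ι] {F : ι → Set X} {p : X} {q : ι → X}
    (hF : ∀ i, IsClopen (F i)) (hdisj : Pairwise (Function.onFun Disjoint F))
    (hcover : ⋃ i, F i = {p}ᶜ) (hq : ∀ i, q i ∈ F i) (hinf : ∀ i, (F i \ {q i}).Infinite)
    (hcount : ∀ i, (F i \ {q i}).Countable) (hiso : ∀ i, ∀ x ∈ F i \ {q i}, IsOpen {x}) :
    Nonempty (X ≃ₜ OnePoint (ℕ × OnePoint ℕ)) := by
  choose h hcont hinj hrange using fun i => exists_onePoint_nat_parametrization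
    (hF i).isClosed.isCompact (hq i) (hinf i) (hcount i) (hiso i)
  obtain ⟨_⟩ := nonempty_denumerable ι
  let e : ℕ ≃ ι := (Denumerable.eqv _).symm
  have hmem (i y) : h i y ∈ F i := hrange i ▸ mem_range_self y
  have hne (i y) : h i y ≠ p := by
    have : h i y ∈ ({p}ᶜ : Set X) := hcover ▸ mem_iUnion_of_mem i (hmem i y)
    exact this
  let g : OnePoint (ℕ × OnePoint ℕ) → X := fun z => z.elim p fun a => h (e a.1) a.2
  have hg : Continuous g := by
    refine (OnePoint.continuous_iff g).2
      ⟨?_, continuous_prod_of_discrete_left.2 fun n => hcont (e n)⟩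
    intro U hU
    obtain ⟨V, hVU, hV, hpV⟩ := mem_nhds_iff.1 hU
    obtain ⟨t, ht⟩ := hV.isClosed_compl.isCompact.elim_finite_subcover F (fun i => (hF i).isOpen)
      (by rw [hcover]; exact compl_subset_compl.2 (singleton_subset_iff.2 hpV))
    rw [mem_map, hasBasis_coclosedCompact.mem_iff]
    refine ⟨(e ⁻¹' t) ×ˢ univ, ⟨?_, ?_⟩, ?_⟩
    · exact (isClosed_discrete _).prod isClosed_univ
    · exact (t.finite_toSet.preimage e.injective.injOn).isCompact.prod isCompact_univ
    · rintro ⟨n, y⟩ hn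
      refine hVU (by_contra fun hnV => hn ⟨?_, mem_univ _⟩)
      obtain ⟨i, hi, hyi⟩ := mem_iUnion₂.1 (ht hnV)
      have : i = e n := by
        by_contra hin
        exact (hdisj hin).le_bot ⟨hyi, hmem _ _⟩
      rwa [this] at hi
  have hbij : Function.Bijective g := by
    constructor
    · intro y z hyz
      induction y using OnePoint.rec with
      | infty =>
        induction z using OnePoint.rec with
        | infty => rfl
        | coe b => exact absurd hyz.symm (hne _ _)
      | coe a =>
        induction z using OnePoint.rec with
        | infty => exact absurd hyz (hne _ _)
        | coe b =>
          obtain ⟨m, y⟩ := a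
          obtain ⟨n, z⟩ := b
          change h (e m) y = h (e n) z at hyz
          have hmn : m = n := by
            by_contra hmn
            exact (hdisj (e.injective.ne hmn)).le_bot ⟨hmem (e m) y, hyz ▸ hmem (e n) z⟩
          subst hmn
          rw [hinj _ hyz]
    · intro x
      by_cases hx : x = p
      · exact ⟨OnePoint.infty, hx.symm⟩
      · have : x ∈ ⋃ i, F i := hcover ▸ hx
        obtain ⟨i, hi⟩ := mem_iUnion.1 this
        rw [← hrange] at hi
        obtain ⟨y, rfl⟩ := hi
        exact ⟨((e.symm i, y) : ℕ × OnePoint ℕ), by simp [g]⟩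
  exact ⟨(Continuous.homeoOfEquivCompactToT2 (f := Equiv.ofBijective g hbij) hg).symm⟩

theorem OnePoint.isClopen_image_coe {Y : Type*} [TopologicalSpace Y] [DiscreteTopology Y]
    {s : Set Y} (hs : s.Finite) : IsClopen ((↑) '' s : Set (OnePoint Y)) :=
  ⟨OnePoint.isClosed_image_coe.2 ⟨isClosed_discrete s, hs.isCompact⟩,
    OnePoint.isOpen_image_coe.2 (isOpen_discrete s)⟩

theorem OnePoint.isOpen_singleton_coe {Y : Type*} [TopologicalSpace Y] [DiscreteTopology Y]
    (y : Y) : IsOpen {(y : OnePoint Y)} := by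
  simpa using (OnePoint.isClopen_image_coe (finite_singleton y)).isOpen

/-- The piece of `ℕ̄ × ℕ̄` on which the minimum of the coordinates is `k`, attained at the first
coordinate, or only at the second one, according to the boolean. -/
def onePointNatSqPiece : ℕ × Bool → Set (OnePoint ℕ × OnePoint ℕ)
  | (k, true) => ((↑) '' ({k} : Set ℕ)) ×ˢ ((↑) '' Iio k)ᶜ
  | (k, false) => ((↑) '' Iic k)ᶜ ×ˢ ((↑) '' ({k} : Set ℕ))

/-- The non-isolated point of `onePointNatSqPiece`. -/
def onePointNatSqCenter : ℕ × Bool → OnePoint ℕ × OnePoint ℕ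
  | (k, true) => (k, OnePoint.infty)
  | (k, false) => (OnePoint.infty, k)

theorem nonempty_homeomorph_onePoint_nat_sq :
    Nonempty (OnePoint ℕ × OnePoint ℕ ≃ₜ OnePoint (ℕ × OnePoint ℕ)) := by
  have hiso (a b : ℕ) : IsOpen {((a : OnePoint ℕ), (b : OnePoint ℕ))} := by
    rw [← singleton_prod_singleton]
    exact (OnePoint.isOpen_singleton_coe a).prod (OnePoint.isOpen_singleton_coe b)
  have hpts (i) (x) (hx : x ∈ onePointNatSqPiece i \ {onePointNatSqCenter i}) :
      ∃ a b : ℕ, x = ((a : OnePoint ℕ), (b : OnePoint ℕ)) := by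
    obtain ⟨x, y⟩ := x
    obtain ⟨k, _ | _⟩ := i <;> induction x using OnePoint.rec <;>
      induction y using OnePoint.rec <;>
      simp_all [onePointNatSqPiece, onePointNatSqCenter]
  refine nonempty_homeomorph_onePoint_nat_prod_onePoint_nat (F := onePointNatSqPiece)
    (p := (OnePoint.infty, OnePoint.infty)) (q := onePointNatSqCenter) ?_ ?_ ?_ ?_ ?_ ?_ ?_
  · rintro ⟨k, _ | _⟩
    · exact (OnePoint.isClopen_image_coe (finite_Iic k)).compl.prod
        (OnePoint.isClopen_image_coe (finite_singleton k))
    · exact (OnePoint.isClopen_image_coe (finite_singleton k)).prod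
        (OnePoint.isClopen_image_coe (finite_Iio k)).compl
  · intro i j hij
    refine disjoint_left.2 ?_
    rintro ⟨x, y⟩ hi hj
    obtain ⟨k, _ | _⟩ := i <;> obtain ⟨l, _ | _⟩ := j <;> induction x using OnePoint.rec <;>
      induction y using OnePoint.rec <;>
      simp [onePointNatSqPiece] at hi hj hij <;> grind
  · ext ⟨x, y⟩
    induction x using OnePoint.rec <;> induction y using OnePoint.rec <;>
      simp only [onePointNatSqPiece, mem_iUnion, Prod.exists, Bool.exists_bool] <;>
      simp <;> grind
  · rintro ⟨k, _ | _⟩ <;> simp [onePointNatSqPiece, onePointNatSqCenter]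
  · rintro ⟨k, _ | _⟩
    · refine infinite_of_injective_forall_mem
        (f := fun n : ℕ => (((k + 1 + n : ℕ) : OnePoint ℕ), (k : OnePoint ℕ))) ?_ ?_
      · intro m n h
        simpa using h
      · intro n
        simp [onePointNatSqPiece, onePointNatSqCenter]
        omega
    · refine infinite_of_injective_forall_mem
        (f := fun n : ℕ => ((k : OnePoint ℕ), ((k + n : ℕ) : OnePoint ℕ))) ?_ ?_
      · intro m n h
        simpa using h
      · intro n
        simp [onePointNatSqPiece, onePointNatSqCenter]
  · intro i
    refine (countable_range fun a : ℕ × ℕ => ((a.1 : OnePoint ℕ), (a.2 : OnePoint ℕ))).mono ?_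
    intro x hx
    obtain ⟨a, b, rfl⟩ := hpts i x hx
    exact ⟨(a, b), rfl⟩
  · intro i x hx
    obtain ⟨a, b, rfl⟩ := hpts i x hx
    exact hiso a b

namespace ChabautySpace

section Discrete

variable {G : Type*} [AddGroup G] [TopologicalSpace G] [DiscreteTopology G]

theorem isClopen_setOf_mem (x : G) : IsClopen {H : ChabautySpace G | x ∈ H.1} := by
  constructor
  · rw [← isOpen_compl_iff]
    refine TopologicalSpace.isOpen_generateFrom_of_mem
      (.inl ⟨{x}, isCompact_singleton, ?_⟩)
    ext H
    simp
  · refine TopologicalSpace.isOpen_generateFrom_of_mem (.inr ⟨{x}, isOpen_discrete _, ?_⟩)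
    ext H
    simp

instance instT2Space : T2Space (ChabautySpace G) := by
  refine ⟨fun H K hHK => ?_⟩
  obtain ⟨x, hx⟩ : ∃ x, ¬(x ∈ H.1 ↔ x ∈ K.1) := by
    by_contra! h
    exact hHK (Subtype.ext (AddSubgroup.ext h))
  have hopen := (isClopen_setOf_mem x).isOpen
  have hopen' := (isClopen_setOf_mem x).compl.isOpen
  by_cases hxH : x ∈ H.1
  · exact ⟨_, _, hopen, hopen', hxH, by simp_all, disjoint_compl_right⟩
  · exact ⟨_, _, hopen', hopen, hxH, by simp_all, disjoint_compl_left⟩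

instance instCompactSpace : CompactSpace (ChabautySpace G) := by
  refine ⟨isCompact_iff_ultrafilter_le_nhds.2 fun 𝒰 _ => ?_⟩
  let L : AddSubgroup G :=
    { carrier := {x | ∀ᶠ H in (𝒰 : Filter (ChabautySpace G)), x ∈ H.1}
      zero_mem' := .of_forall fun H => H.1.zero_mem
      add_mem' := fun hx hy => (hx.and hy).mono fun H h => H.1.add_mem h.1 h.2
      neg_mem' := fun hx => hx.mono fun H h => H.1.neg_mem h }
  refine ⟨⟨L, isClosed_discrete _⟩, mem_univ _, ?_⟩
  refine TopologicalSpace.tendsto_nhds_generateFrom_iff (m := id).2 ?_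
  rintro _ (⟨K, hK, rfl⟩ | ⟨U, -, rfl⟩) hL
  · have h : ∀ x ∈ K, ∀ᶠ H in (𝒰 : Filter (ChabautySpace G)), x ∉ H.1 := fun x hx =>
      Ultrafilter.eventually_not.2 fun hxL => (hL.subset ⟨hxL, hx⟩ : x ∈ (∅ : Set G))
    filter_upwards [(eventually_all_finite (isCompact_iff_finite.1 hK)).2 h] with H hH
    exact eq_empty_of_forall_notMem fun x hx => hH x hx.2 hx.1
  · obtain ⟨x, hxL, hxU⟩ := hL
    filter_upwards [hxL] with H hH
    exact ⟨x, hH, hxU⟩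

end Discrete

end ChabautySpace

/-- The bijection `0, -1, 1, -2, 2, …` from `ℤ` to `ℕ`. -/
def zigzag (a : ℤ) : ℕ := if 0 ≤ a then 2 * a.natAbs else 2 * a.natAbs - 1

theorem zigzag_injective : Function.Injective zigzag := by
  intro a b h
  unfold zigzag at h
  split_ifs at h <;> omega

theorem zigzag_lt_zigzag_mul {a k : ℤ} (ha : a ≠ 0) (hk : 2 ≤ k.natAbs) :
    zigzag a < zigzag (k * a) := by
  have h : 2 * a.natAbs ≤ (k * a).natAbs := by
    rw [Int.natAbs_mul]
    exact Nat.mul_le_mul_right _ hk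
  unfold zigzag
  split_ifs <;> omega

/-- An injective enumeration of `ℤ²` that strictly increases under multiplication by an integer of
absolute value at least two. -/
def latticeRank (v : ℤ × ℤ) : ℕ := Nat.pair (zigzag v.1) (zigzag v.2)

theorem latticeRank_injective : Function.Injective latticeRank := fun v w h => by
  obtain ⟨h₁, h₂⟩ := Nat.pair_eq_pair.1 h
  exact Prod.ext (zigzag_injective h₁) (zigzag_injective h₂)

theorem finite_setOf_latticeRank_lt (n : ℕ) : {w | latticeRank w < n}.Finite :=
  (finite_Iio n).preimage latticeRank_injective.injOn

theorem latticeRank_lt_latticeRank_smul {v : ℤ × ℤ} {k : ℤ} (hv : v ≠ 0) (hk : 2 ≤ k.natAbs) :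
    latticeRank v < latticeRank (k • v) := by
  obtain ⟨a, b⟩ := v
  simp only [latticeRank, Prod.smul_mk, smul_eq_mul]
  by_cases ha : a = 0
  · subst ha
    have hb : b ≠ 0 := by rintro rfl; exact hv rfl
    simpa using Nat.pair_lt_pair_right _ (zigzag_lt_zigzag_mul hb hk)
  · refine (Nat.pair_lt_pair_left _ (zigzag_lt_zigzag_mul ha hk)).trans_le ?_
    by_cases hb : b = 0
    · simp [hb]
    · exact (Nat.pair_lt_pair_right _ (zigzag_lt_zigzag_mul hb hk)).le

/-- The determinant of two vectors of `ℤ²`. -/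
def latticeDet (v w : ℤ × ℤ) : ℤ := v.1 * w.2 - v.2 * w.1

theorem exists_common_divisor_of_latticeDet_eq_zero {v w : ℤ × ℤ} (hv : v ≠ 0)
    (h : latticeDet v w = 0) :
    ∃ s t k m : ℤ, v = k • (s • v + t • w) ∧ w = m • (s • v + t • w) := by
  obtain ⟨a, b⟩ := v
  obtain ⟨c, d⟩ := w
  have hgcd : gcd a b ≠ 0 := fun h0 => by
    rw [gcd_eq_zero_iff] at h0
    exact hv (Prod.ext h0.1 h0.2)
  obtain ⟨g, a', b', rfl, rfl, hg, x, y, hxy⟩ : ∃ g a' b' : ℤ,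
      a = g * a' ∧ b = g * b' ∧ g ≠ 0 ∧ IsCoprime a' b' :=
    ⟨gcd a b, a / gcd a b, b / gcd a b, (Int.mul_ediv_cancel' (gcd_dvd_left a b)).symm,
      (Int.mul_ediv_cancel' (gcd_dvd_right a b)).symm, hgcd,
      isCoprime_div_gcd_div_gcd_of_gcd_ne_zero hgcd⟩
  have hdet : a' * d = b' * c := mul_left_cancel₀ hg (by
    simp only [latticeDet] at h
    linear_combination h)
  obtain ⟨r, rfl, rfl⟩ : ∃ r, c = r * a' ∧ d = r * b' :=
    ⟨x * c + y * d, by linear_combination -c * hxy - y * hdet,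
      by linear_combination -d * hxy + x * hdet⟩
  obtain ⟨k, hk⟩ := Int.gcd_dvd_left g r
  obtain ⟨m, hm⟩ := Int.gcd_dvd_right g r
  have hbez := Int.gcd_eq_gcd_ab g r
  refine ⟨Int.gcdA g r, Int.gcdB g r, k, m, ?_, ?_⟩
  · ext <;> simp only [Prod.smul_mk, Prod.mk_add_mk, smul_eq_mul]
    · linear_combination a' * hk + k * a' * hbez
    · linear_combination b' * hk + k * b' * hbez
  · ext <;> simp only [Prod.smul_mk, Prod.mk_add_mk, smul_eq_mul]
    · linear_combination a' * hm + m * a' * hbez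
    · linear_combination b' * hm + m * b' * hbez

theorem latticeDet_smul_mem {H : AddSubgroup (ℤ × ℤ)} {v w : ℤ × ℤ} (hv : v ∈ H) (hw : w ∈ H)
    (x : ℤ × ℤ) : latticeDet v w • x ∈ H := by
  have : latticeDet v w • x = latticeDet x w • v + latticeDet v x • w := by
    ext <;> simp [latticeDet] <;> ring
  rw [this]
  exact H.add_mem (H.zsmul_mem hv _) (H.zsmul_mem hw _)

theorem AddSubgroup.countable_of_isNoetherian_int {A : Type*} [AddCommGroup A] [Countable A]
    [IsNoetherian ℤ A] : Countable (AddSubgroup A) := by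
  refine Function.Surjective.countable (f := fun s : Finset A => AddSubgroup.closure (s : Set A))
    fun H => ?_
  obtain ⟨s, hs⟩ := IsNoetherian.noetherian (AddSubgroup.toIntSubmodule H)
  refine ⟨s, ?_⟩
  change AddSubgroup.closure (s : Set A) = H
  rw [← Submodule.span_int_eq_addSubgroupClosure, hs]
  rfl

theorem ChabautySpace.isOpen_singleton_of_latticeDet_ne_zero {H : ChabautySpace (ℤ × ℤ)}
    {v w : ℤ × ℤ} (hv : v ∈ H.1) (hw : w ∈ H.1) (h : latticeDet v w ≠ 0) :
    IsOpen {H} := by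
  set D := latticeDet v w
  let B : Set (ℤ × ℤ) := Ico 0 |D| ×ˢ Ico 0 |D|
  have hB : B.Finite := (finite_Ico _ _).prod (finite_Ico _ _)
  have key : {H} = {K : ChabautySpace (ℤ × ℤ) | v ∈ K.1} ∩ {K | w ∈ K.1} ∩
      ⋂ x ∈ B, {K | x ∈ K.1 ↔ x ∈ H.1} := by
    ext K
    simp only [mem_singleton_iff, mem_inter_iff, mem_ofPred_eq, mem_iInter]
    constructor
    · rintro rfl
      exact ⟨⟨hv, hw⟩, fun x _ => Iff.rfl⟩
    · rintro ⟨⟨hvK, hwK⟩, hK⟩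
      refine Subtype.ext (AddSubgroup.ext fun x => ?_)
      obtain ⟨r, hr, hxr⟩ : ∃ r ∈ B, ∃ y : ℤ × ℤ, x = D • y + r := by
        refine ⟨(x.1 % D, x.2 % D), ?_, (x.1 / D, x.2 / D), ?_⟩
        · exact ⟨⟨Int.emod_nonneg _ h, Int.emod_lt_abs _ h⟩,
            ⟨Int.emod_nonneg _ h, Int.emod_lt_abs _ h⟩⟩
        · ext <;> simp [Int.mul_ediv_add_emod]
      obtain ⟨y, rfl⟩ := hxr
      rw [AddSubgroup.add_mem_cancel_left _ (latticeDet_smul_mem hvK hwK y),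
        AddSubgroup.add_mem_cancel_left _ (latticeDet_smul_mem hv hw y)]
      exact hK r hr
  rw [key]
  refine ((isClopen_setOf_mem v).isOpen.inter (isClopen_setOf_mem w).isOpen).inter
    (hB.isOpen_biInter fun x _ => ?_)
  by_cases hx : x ∈ H.1
  · simpa [hx] using (isClopen_setOf_mem x).isOpen
  · simp only [hx, iff_false]
    exact (isClopen_setOf_mem x).compl.isOpen

/-- The subgroups of `ℤ²` whose nonzero element of least rank is `v`. -/
def chabautyPiece (v : ℤ × ℤ) : Set (ChabautySpace (ℤ × ℤ)) :=
  {H | v ∈ H.1} ∩ ⋂ w ∈ {w | latticeRank w < latticeRank v}, {H | w ∈ H.1 → w = 0}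

theorem mem_chabautyPiece {v : ℤ × ℤ} {H : ChabautySpace (ℤ × ℤ)} : H ∈ chabautyPiece v ↔
    v ∈ H.1 ∧ ∀ w ∈ H.1, w ≠ 0 → latticeRank v ≤ latticeRank w := by
  simp only [chabautyPiece, mem_inter_iff, mem_ofPred_eq, mem_iInter]
  grind

theorem isClopen_chabautyPiece (v : ℤ × ℤ) : IsClopen (chabautyPiece v) := by
  refine (ChabautySpace.isClopen_setOf_mem v).inter
    ((finite_setOf_latticeRank_lt _).isClopen_biInter fun w _ => ?_)
  by_cases hw : w = 0
  · simpa [hw] using isClopen_univ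
  · simp only [hw, imp_false]
    exact (ChabautySpace.isClopen_setOf_mem w).compl

/-- The cyclic subgroup of `ℤ²` generated by `v`. -/
def chabautyCyclic (v : ℤ × ℤ) : ChabautySpace (ℤ × ℤ) :=
  ⟨AddSubgroup.zmultiples v, isClosed_discrete _⟩

theorem chabautyCyclic_mem_chabautyPiece {v : ℤ × ℤ} (h : latticeRank v ≤ latticeRank (-v)) :
    chabautyCyclic v ∈ chabautyPiece v := by
  refine mem_chabautyPiece.2 ⟨AddSubgroup.mem_zmultiples v, ?_⟩
  rintro _ ⟨k, rfl⟩ hk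
  simp only at hk ⊢
  have hv : v ≠ 0 := by rintro rfl; simp at hk
  by_cases h2 : 2 ≤ k.natAbs
  · exact (latticeRank_lt_latticeRank_smul hv h2).le
  · obtain rfl | rfl | rfl : k = 0 ∨ k = 1 ∨ k = -1 := by omega
    · simp at hk
    · simp
    · simpa using h

theorem exists_latticeDet_ne_zero {v : ℤ × ℤ} (hv : v ≠ 0) {H : ChabautySpace (ℤ × ℤ)}
    (hH : H ∈ chabautyPiece v \ {chabautyCyclic v}) : ∃ w ∈ H.1, latticeDet v w ≠ 0 := by
  obtain ⟨hvH, hmin⟩ := mem_chabautyPiece.1 hH.1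
  by_contra! hdet
  refine hH.2 (Subtype.ext (le_antisymm (fun w hw => ?_)
    (AddSubgroup.zmultiples_le_of_mem hvH)))
  obtain ⟨s, t, k, m, hk, hm⟩ := exists_common_divisor_of_latticeDet_eq_zero hv (hdet w hw)
  set u := s • v + t • w
  have hu : u ∈ H.1 := H.1.add_mem (H.1.zsmul_mem hvH _) (H.1.zsmul_mem hw _)
  have hu0 : u ≠ 0 := fun h0 => hv (by rw [hk, h0, smul_zero])
  have hk1 : ¬ 2 ≤ k.natAbs := fun h2 =>
    absurd (hk ▸ hmin u hu hu0) (latticeRank_lt_latticeRank_smul hu0 h2).not_ge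
  have hk0 : k ≠ 0 := fun h0 => hv (by rw [hk, h0, zero_smul])
  change w ∈ AddSubgroup.zmultiples v
  obtain rfl | rfl : k = 1 ∨ k = -1 := by omega
  · exact ⟨m, by rw [hm, hk]; simp⟩
  · exact ⟨-m, by rw [hm, hk]; simp⟩

/-- The subgroup of `ℤ²` generated by `v` and `n` times the rotation of `v` by a right angle. -/
def chabautyRect (v : ℤ × ℤ) (n : ℤ) : ChabautySpace (ℤ × ℤ) :=
  ⟨AddSubgroup.closure {v, n • (-v.2, v.1)}, isClosed_discrete _⟩

theorem mem_chabautyRect {v w : ℤ × ℤ} {n : ℤ} :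
    w ∈ (chabautyRect v n).1 ↔ ∃ k m : ℤ, k • v + m • n • (-v.2, v.1) = w :=
  AddSubgroup.mem_closure_pair

theorem infinite_chabautyPiece_diff {v : ℤ × ℤ} (hv : v ≠ 0)
    (h : latticeRank v ≤ latticeRank (-v)) :
    (chabautyPiece v \ {chabautyCyclic v}).Infinite := by
  have hN : 0 < v.1 ^ 2 + v.2 ^ 2 := by
    by_contra! hle
    exact hv (Prod.ext (by simp; nlinarith [sq_nonneg v.1, sq_nonneg v.2])
      (by simp; nlinarith [sq_nonneg v.1, sq_nonneg v.2]))
  have hdet (k m : ℤ) (n : ℤ) : latticeDet v (k • v + m • n • (-v.2, v.1)) =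
      n * (m * (v.1 ^ 2 + v.2 ^ 2)) := by
    simp [latticeDet]; ring
  obtain ⟨B, hB⟩ := ((finite_setOf_latticeRank_lt (latticeRank v)).image
    fun w => |latticeDet v w|).bddAbove
  have hmem (n : ℤ) : n • (-v.2, v.1) ∈ (chabautyRect v n).1 :=
    mem_chabautyRect.2 ⟨0, 1, by simp⟩
  have hdvd {n : ℤ} {w : ℤ × ℤ} (hw : w ∈ (chabautyRect v n).1) :
      n * (v.1 ^ 2 + v.2 ^ 2) ∣ latticeDet v w := by
    obtain ⟨k, m, rfl⟩ := mem_chabautyRect.1 hw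
    exact ⟨m, by rw [hdet]; ring⟩
  have hdetn (n : ℤ) : latticeDet v (n • (-v.2, v.1)) = n * (v.1 ^ 2 + v.2 ^ 2) := by
    simp [latticeDet]; ring
  refine infinite_of_injective_forall_mem (f := fun n : ℕ => chabautyRect v (|B| + 1 + n)) ?_ ?_
  · have hle {m n : ℕ} (hmn : chabautyRect v (|B| + 1 + m) = chabautyRect v (|B| + 1 + n)) :
        n ≤ m := by
      have h1 := hdvd (hmn ▸ hmem (|B| + 1 + m))
      rw [hdetn] at h1
      have h2 := Int.le_of_dvd (by positivity) (Int.dvd_of_mul_dvd_mul_right hN.ne' h1)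
      omega
    exact fun m n hmn => le_antisymm (hle hmn.symm) (hle hmn)
  · intro n
    have hn : |B| < |B| + 1 + (n : ℤ) := by omega
    have hn0 : 0 < |B| + 1 + (n : ℤ) := (abs_nonneg B).trans_lt hn
    refine ⟨mem_chabautyPiece.2 ⟨mem_chabautyRect.2 ⟨1, 0, by simp⟩, fun w hw hw0 => ?_⟩, ?_⟩
    · by_contra! hlt
      have hwB : |latticeDet v w| < |B| + 1 + (n : ℤ) :=
        ((hB ⟨w, hlt, rfl⟩).trans (le_abs_self B)).trans_lt hn
      have hw' : latticeDet v w = 0 :=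
        Int.eq_zero_of_abs_lt_dvd ((dvd_mul_right _ _).trans (hdvd hw)) hwB
      obtain ⟨k, m, rfl⟩ := mem_chabautyRect.1 hw
      rw [hdet] at hw'
      have hm : m = 0 := by simpa [hn0.ne', hN.ne'] using hw'
      subst hm
      have := (mem_chabautyPiece.1 (chabautyCyclic_mem_chabautyPiece h)).2 _
        ⟨k, by simp⟩ hw0
      exact absurd hlt this.not_gt
    · intro heq
      have hmem' := hmem (|B| + 1 + n)
      rw [mem_singleton_iff.1 heq] at hmem'
      obtain ⟨k, hk⟩ := hmem'
      have h3 := hdetn (|B| + 1 + n)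
      rw [← hk] at h3
      have h4 : latticeDet v (k • v) = 0 := by simp [latticeDet]; ring
      exact (mul_pos hn0 hN).ne' (h3.symm.trans h4)

theorem ChabautySpace.nonempty_homeomorph_onePoint :
    Nonempty (ChabautySpace (ℤ × ℤ) ≃ₜ OnePoint (ℕ × OnePoint ℕ)) := by
  let ι := {v : ℤ × ℤ // v ≠ 0 ∧ latticeRank v ≤ latticeRank (-v)}
  have : Infinite ι := by
    refine .of_injective (fun n : ℕ => ⟨(-(n + 1 : ℤ), 0), ?_, ?_⟩) ?_
    · simp; omega
    · simp only [latticeRank]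
      refine (Nat.pair_lt_pair_left _ ?_).le
      unfold zigzag
      split_ifs <;> simp at * <;> omega
    · intro m n h
      simpa using congrArg (fun v : ι => v.1.1) h
  refine nonempty_homeomorph_onePoint_nat_prod_onePoint_nat (ι := ι)
    (F := fun v => chabautyPiece v.1) (p := ⟨⊥, isClosed_discrete _⟩)
    (q := fun v => chabautyCyclic v.1) (fun v => isClopen_chabautyPiece v.1) ?_ ?_
    (fun v => chabautyCyclic_mem_chabautyPiece v.2.2)
    (fun v => infinite_chabautyPiece_diff v.2.1 v.2.2) ?_ ?_
  · intro v w hvw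
    refine disjoint_left.2 fun H hv hw => hvw (Subtype.ext (latticeRank_injective ?_))
    obtain ⟨hv, hv'⟩ := mem_chabautyPiece.1 hv
    obtain ⟨hw, hw'⟩ := mem_chabautyPiece.1 hw
    exact le_antisymm (hv' _ hw w.2.1) (hw' _ hv v.2.1)
  · ext H
    simp only [mem_iUnion, mem_compl_iff]
    constructor
    · rintro ⟨v, hv⟩ rfl
      exact v.2.1 (AddSubgroup.mem_bot.1 (mem_chabautyPiece.1 hv).1)
    · intro hH
      have hne : {w | w ∈ H.1 ∧ w ≠ 0}.Nonempty := by
        by_contra! hempty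
        refine hH (Subtype.ext ((AddSubgroup.eq_bot_iff_forall _).2 fun w hw => ?_))
        by_contra hw0
        exact (hempty.subset ⟨hw, hw0⟩ : w ∈ (∅ : Set (ℤ × ℤ)))
      obtain ⟨v, ⟨hv, hv0⟩, hmin⟩ := exists_minimalFor_of_wellFoundedLT
        (fun w => w ∈ H.1 ∧ w ≠ 0) latticeRank hne
      have hmin' (w) (hw : w ∈ H.1) (hw0 : w ≠ 0) : latticeRank v ≤ latticeRank w :=
        (le_total _ _).elim id (hmin ⟨hw, hw0⟩)
      exact ⟨⟨v, hv0, hmin' _ (H.1.neg_mem hv) (neg_ne_zero.2 hv0)⟩,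
        mem_chabautyPiece.2 ⟨hv, hmin'⟩⟩
  · intro v
    have : Countable (AddSubgroup (ℤ × ℤ)) := AddSubgroup.countable_of_isNoetherian_int
    have : Countable (ChabautySpace (ℤ × ℤ)) := Subtype.countable
    exact to_countable _
  · intro v H hH
    obtain ⟨w, hw, hdet⟩ := exists_latticeDet_ne_zero v.2.1 hH
    exact isOpen_singleton_of_latticeDet_ne_zero (mem_chabautyPiece.1 hH.1).1 hw hdet

/-- The Chabauty space of the discrete group `ℤ²` is homeomorphic to `ℕ̄ × ℕ̄`, where
`ℕ̄ = ℕ ∪ {∞}` is the one-point compactification of `ℕ`. -/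
theorem chabauty_Z2_homeomorph_onePoint_sq :
    Nonempty (ChabautySpace (ℤ × ℤ) ≃ₜ OnePoint ℕ × OnePoint ℕ) := by
  obtain ⟨e⟩ := ChabautySpace.nonempty_homeomorph_onePoint
  obtain ⟨f⟩ := nonempty_homeomorph_onePoint_nat_sq
  exact ⟨e.trans f.symm⟩
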